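/- arXiv:math/0702114 — 2 statements merged into one kernel-verified Lean document; each statement's English description precedes it below -/
import Mathlib

section
/- The set of singular points of the sextic surface B₆ = 0 in ℙ³(ℂ) consists of exactly the 27 points represented by (1, 0, a, b), (1, a, 0, b) and (1, a, b, 0) where a, b ∈ ℂ satisfy a³ = b³ = −1/3; in particular this set has exactly 27 elements and none of these points lies on the Fermat cubic R = 0. -/
/-!
Substituting `tᵢ = yᵢ³`, one has `B₆ = q(t)` for a quadratic form `q`. Since
`∂B₆/∂yᵢ = 3 yᵢ² · ∂q/∂tᵢ`, a point is singular iff `tᵢ = 0` or `∂q/∂tᵢ = 0` for each `i`. With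
`u = t₁ + t₂ + t₃` and `c = 3t₀ + 5u`, this says `t₀ = 0` or `2t₀ + 3u = 0`, and `tᵢ ∈ {0, c}` for
`i ≥ 1`. Here `c ≠ 0`, as otherwise all `tᵢ` vanish. If `k` of the `tᵢ` with `i ≥ 1` are nonzero
then `u = kc`, so `3t₀ = (1 - 5k)c ≠ 0`, and `2t₀ + 3kc = 0` forces `k = 2` and `c = -t₀ / 3`. The
three positions of the remaining zero and the choices of two cube roots of `-1/3` give
`3 · 3² = 27` points, and there `R = t₀ + 2c = t₀ / 3 ≠ 0`.
-/

open MvPolynomial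

/-- The Fermat cubic `R = y₀³ + y₁³ + y₂³ + y₃³`. -/
noncomputable def fermatR : MvPolynomial (Fin 4) ℂ := X 0 ^ 3 + X 1 ^ 3 + X 2 ^ 3 + X 3 ^ 3

/-- The cubic `S₁ = y₁³ + R`. -/
noncomputable def fermatS1 : MvPolynomial (Fin 4) ℂ := X 1 ^ 3 + fermatR

/-- The cubic `S₂ = y₂³ + R`. -/
noncomputable def fermatS2 : MvPolynomial (Fin 4) ℂ := X 2 ^ 3 + fermatR

/-- The cubic `S₃ = y₃³ + R`. -/
noncomputable def fermatS3 : MvPolynomial (Fin 4) ℂ := X 3 ^ 3 + fermatR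

/-- The cubic `S = y₁·y₂·y₃`. -/
noncomputable def fermatQ : MvPolynomial (Fin 4) ℂ := X 1 * X 2 * X 3

open LinearAlgebra.Projectivization

section Expand

variable {σ R : Type*} [CommSemiring R]

lemma pderiv_expand (n : ℕ) (i : σ) (P : MvPolynomial σ R) :
    pderiv i (expand n P) = (n : MvPolynomial σ R) * X i ^ (n - 1) * expand n (pderiv i P) := by
  classical
  induction P using MvPolynomial.induction_on with
  | C a => simp
  | add P Q hP hQ => simp only [map_add, hP, hQ, mul_add]
  | mul_X P j hP =>
    simp only [map_mul, pderiv_mul, pderiv_pow, expand_X, map_add, hP]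
    rcases eq_or_ne j i with rfl | hji
    · simp only [pderiv_X_self, map_one]
      ring
    · simp only [pderiv_X_of_ne hji, map_zero, mul_zero, add_zero]
      ring

lemma eval_pderiv_expand_eq_zero_iff [NoZeroDivisors R] {n : ℕ} (hn : 2 ≤ n) (hnR : (n : R) ≠ 0)
    (x : σ → R) (i : σ) (P : MvPolynomial σ R) :
    eval x (pderiv i (expand n P)) = 0 ↔ x i = 0 ∨ eval (x ^ n) (pderiv i P) = 0 := by
  have : Nontrivial R := ⟨_, _, hnR⟩
  have hn' : n - 1 ≠ 0 := by lia
  simp [pderiv_expand, hnR, hn']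

end Expand

section FacePoint

variable {K : Type*} {n : ℕ}

/-- The vector `(1, z₀, …, 0, …, zₙ₋₁)` with first coordinate `1` and a `0` inserted into `z` at
position `j`. For `n = 2` these are the representatives `(1, 0, a, b)`, `(1, a, 0, b)` and
`(1, a, b, 0)`. -/
def facePoint [Zero K] [One K] (j : Fin (n + 1)) (z : Fin n → K) : Fin (n + 2) → K :=
  Fin.cons 1 (j.insertNth 0 z)

@[simp]
lemma facePoint_zero [Zero K] [One K] (j : Fin (n + 1)) (z : Fin n → K) : facePoint j z 0 = 1 :=
  rfl

@[simp]
lemma facePoint_succ_self [Zero K] [One K] (j : Fin (n + 1)) (z : Fin n → K) :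
    facePoint j z j.succ = 0 := by
  simp [facePoint]

@[simp]
lemma facePoint_succ_succAbove [Zero K] [One K] (j : Fin (n + 1)) (z : Fin n → K) (i : Fin n) :
    facePoint j z (j.succAbove i).succ = z i := by
  simp [facePoint]

lemma facePoint_ne_zero [Zero K] [One K] [NeZero (1 : K)] (j : Fin (n + 1)) (z : Fin n → K) :
    facePoint j z ≠ 0 :=
  fun h => one_ne_zero (congrFun h 0)

lemma facePoint_pow [MonoidWithZero K] {m : ℕ} (hm : m ≠ 0) (j : Fin (n + 1)) (z : Fin n → K) :
    facePoint j z ^ m = facePoint j (z ^ m) := by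
  ext i
  refine Fin.cases ?_ (fun i => ?_) i
  · simp
  · induction i using j.succAboveCases <;> simp [hm]

lemma facePoint_inj [Zero K] [One K] {j k : Fin (n + 1)} {z w : Fin n → K}
    (hz : ∀ i, z i ≠ 0) (h : facePoint j z = facePoint k w) : j = k ∧ z = w := by
  have hins : (j.insertNth 0 z : Fin (n + 1) → K) = k.insertNth 0 w := Fin.cons_right_injective _ h
  obtain rfl : j = k := by
    by_contra hjk
    obtain ⟨i, rfl⟩ := Fin.exists_succAbove_eq (Ne.symm hjk)
    exact hz i (by simpa using congrFun hins (j.succAbove i))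
  exact ⟨rfl, Fin.insertNth_right_injective (α := fun _ => K) _ hins⟩

lemma exists_pow_eq_smul_facePoint_iff [Field K] {m : ℕ} (hm : m ≠ 0) (x : Fin (n + 2) → K)
    (a : Fin n → K) :
    (∃ c ≠ (0 : K), ∃ j, x ^ m = c • facePoint j a) ↔
      ∃ c ≠ (0 : K), ∃ j, ∃ z, z ^ m = a ∧ x = c • facePoint j z := by
  constructor
  · rintro ⟨c, hc, j, hx⟩
    have hx0 : x 0 ^ m = c := by simpa using congrFun hx 0
    have hx0' : x 0 ≠ 0 := by
      rintro h
      exact hc (by rw [← hx0, h, zero_pow hm])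
    refine ⟨x 0, hx0', j, fun i => x (j.succAbove i).succ / x 0, ?_, ?_⟩
    · ext i
      have hi : x (j.succAbove i).succ ^ m = c * a i := by
        simpa using congrFun hx (j.succAbove i).succ
      rw [Pi.pow_apply, div_pow, hi, hx0, mul_div_cancel_left₀ _ hc]
    · have hj : x j.succ = 0 := by
        simpa [hm] using congrFun hx j.succ
      ext i
      refine Fin.cases ?_ (fun i => ?_) i
      · simp
      · induction i using j.succAboveCases <;> simp [hj, mul_div_cancel₀, hx0']
  · rintro ⟨c, hc, j, z, rfl, rfl⟩
    exact ⟨c ^ m, pow_ne_zero m hc, j, by rw [smul_pow, facePoint_pow hm]⟩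

lemma projectivization_mk_facePoint_inj [DivisionRing K] {j k : Fin (n + 1)} {z w : Fin n → K}
    (hz : ∀ i, z i ≠ 0)
    (h : Projectivization.mk K (facePoint j z) (facePoint_ne_zero j z) =
      Projectivization.mk K (facePoint k w) (facePoint_ne_zero k w)) :
    j = k ∧ z = w := by
  obtain ⟨c, hc⟩ := (Projectivization.mk_eq_mk_iff' K _ _ _ _).1 h
  obtain rfl : c = 1 := by simpa using congrFun hc 0
  exact facePoint_inj hz (by rw [← hc, one_smul])

lemma sum_facePoint_succ [NonAssocSemiring K] (j : Fin (n + 1)) (z : Fin n → K) :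
    ∑ i : Fin (n + 1), facePoint j z i.succ = ∑ i, z i := by
  simp [Fin.sum_univ_succAbove _ j]

end FacePoint

section Count

lemma card_pow_eq_of_isAlgClosed {K : Type*} [Field K] [IsAlgClosed K] {m : ℕ} {a : K}
    (hm : (m : K) ≠ 0) (ha : a ≠ 0) : Nat.card {z : K // z ^ m = a} = m := by
  have hsep := Polynomial.separable_X_pow_sub_C a hm ha
  have hroot : ∀ z, z ^ m = a ↔ z ∈ (Polynomial.X ^ m - Polynomial.C a).rootSet K := fun z => by
    simp [Polynomial.mem_rootSet_of_ne hsep.ne_zero, sub_eq_zero]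
  rw [Nat.card_congr (Equiv.subtypeEquivRight hroot), Nat.card_eq_fintype_card,
    Polynomial.card_rootSet_eq_natDegree hsep (IsAlgClosed.splits _),
    Polynomial.natDegree_X_pow_sub_C]

lemma sum_eq_card_ne_zero_mul {ι R : Type*} [Fintype ι] [Semiring R] [DecidableEq R] {u : ι → R}
    {c : R} (hu : ∀ i, u i = 0 ∨ u i = c) :
    ∑ i, u i = (Finset.univ.filter fun i => u i ≠ 0).card * c := by
  rw [← Finset.sum_filter_ne_zero, ← nsmul_eq_mul]
  exact Finset.sum_eq_card_nsmul fun i hi => (hu i).resolve_left (Finset.mem_filter.1 hi).2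

lemma exists_eq_insertNth_zero_const {R : Type*} [Zero R] [DecidableEq R] {n : ℕ}
    {u : Fin (n + 1) → R} {c : R} (hu : ∀ i, u i = 0 ∨ u i = c)
    (hcard : (Finset.univ.filter fun i => u i ≠ 0).card = n) :
    ∃ j : Fin (n + 1), u = j.insertNth 0 fun _ => c := by
  have hzeros : (Finset.univ.filter fun i => u i = 0).card = 1 := by
    have := Finset.card_filter_add_card_filter_not (s := Finset.univ) (fun i => u i = 0)
    simp only [Finset.card_univ, Fintype.card_fin] at this
    lia
  obtain ⟨j, hj⟩ := Finset.card_eq_one.1 hzeros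
  have hiff : ∀ i, u i = 0 ↔ i = j := fun i => by
    simpa using Finset.ext_iff.1 hj i
  refine ⟨j, Fin.eq_insertNth_iff.2 ⟨(hiff j).2 rfl, funext fun i => ?_⟩⟩
  exact (hu _).resolve_left fun h => Fin.succAbove_ne j i ((hiff _).1 h)

end Count

section ProjectiveSets

variable {K : Type*} [Field K]

/-- The points of projective space, with homogeneous coordinates indexed by `σ`, at which all
partial derivatives of `P` vanish. For a form `P` of positive degree invertible in `K` these are the
singular points of the hypersurface `P = 0`. -/
def singularLocus {σ : Type*} (P : MvPolynomial σ K) : Set (ℙ K (σ → K)) :=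
  {p | ∃ (x : σ → K) (hx : x ≠ 0), Projectivization.mk K x hx = p ∧
    ∀ i, eval x (pderiv i P) = 0}

/-- The points of `ℙⁿ⁺¹` represented by `facePoint j z` where all entries of `z` are `m`-th roots
of `a`. -/
def facePoints (n m : ℕ) (a : K) : Set (ℙ K (Fin (n + 2) → K)) :=
  Set.range fun q : Fin (n + 1) × (Fin n → {z : K // z ^ m = a}) =>
    Projectivization.mk K (facePoint q.1 fun i => (q.2 i : K)) (facePoint_ne_zero _ _)

lemma facePoints_two (m : ℕ) (α : K) :
    facePoints 2 m α = {p | ∃ (x : Fin 4 → K) (hx : x ≠ 0), Projectivization.mk K x hx = p ∧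
      ∃ a b : K, a ^ m = α ∧ b ^ m = α ∧
        (x = ![1, 0, a, b] ∨ x = ![1, a, 0, b] ∨ x = ![1, a, b, 0])} := by
  have hfacePoint : ∀ a b : K, facePoint 0 ![a, b] = ![1, 0, a, b] ∧
      facePoint 1 ![a, b] = ![1, a, 0, b] ∧ facePoint 2 ![a, b] = ![1, a, b, 0] := fun a b => by
    refine ⟨?_, ?_, ?_⟩ <;> ext i <;> fin_cases i <;> rfl
  have hpair : ∀ z : Fin 2 → {z : K // z ^ m = α}, (fun i => (z i : K)) = ![↑(z 0), ↑(z 1)] :=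
    fun z => by ext i; fin_cases i <;> rfl
  ext p
  constructor
  · rintro ⟨⟨j, z⟩, rfl⟩
    refine ⟨_, facePoint_ne_zero j _, rfl, z 0, z 1, (z 0).2, (z 1).2, ?_⟩
    rw [hpair]
    fin_cases j <;> simp [hfacePoint]
  · rintro ⟨x, hx, rfl, a, b, ha, hb, hxab⟩
    obtain ⟨j, rfl⟩ : ∃ j, facePoint j ![a, b] = x := by
      rcases hxab with rfl | rfl | rfl
      exacts [⟨0, (hfacePoint a b).1⟩, ⟨1, (hfacePoint a b).2.1⟩, ⟨2, (hfacePoint a b).2.2⟩]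
    exact ⟨(j, ![⟨a, ha⟩, ⟨b, hb⟩]), by simp [hpair]⟩

lemma ncard_facePoints [IsAlgClosed K] (n : ℕ) {m : ℕ} {a : K} (hm : (m : K) ≠ 0) (ha : a ≠ 0) :
    (facePoints n m a).ncard = (n + 1) * m ^ n := by
  have hm' : m ≠ 0 := fun h => hm (by simp [h])
  have hroot : ∀ z : {z : K // z ^ m = a}, (z : K) ≠ 0 := fun z =>
    ne_zero_pow hm' (z.2.symm ▸ ha)
  rw [facePoints, ← Nat.card_coe_set_eq, Nat.card_range_of_injective]
  · simp [Nat.card_prod, Nat.card_fun, card_pow_eq_of_isAlgClosed hm ha]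
  · rintro ⟨j, z⟩ ⟨k, w⟩ h
    obtain ⟨rfl, hzw⟩ := projectivization_mk_facePoint_inj (fun i => hroot (z i)) h
    exact Prod.ext rfl (funext fun i => Subtype.ext (congrFun hzw i))

end ProjectiveSets

section Quadric

/-- The quadratic form in `t = (t₀, t₁, t₂, t₃)` from which the residual sextic arises by
substituting `tᵢ = yᵢ³`. With `r = t₀ + t₁ + t₂ + t₃` it is
`((t₁ + r)(t₂ + r)(t₃ + r) - t₁t₂t₃) / r`. -/
noncomputable def residualQuadric (R : Type*) [CommSemiring R] : MvPolynomial (Fin 4) R :=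
  (X 0 + X 1 + X 2 + X 3) ^ 2 + (X 1 + X 2 + X 3) * (X 0 + X 1 + X 2 + X 3) +
    (X 1 * X 2 + X 1 * X 3 + X 2 * X 3)

lemma eval_pderiv_zero_residualQuadric {R : Type*} [CommSemiring R] (t : Fin 4 → R) :
    eval t (pderiv 0 (residualQuadric R)) = 2 * t 0 + 3 * ∑ i : Fin 3, t i.succ := by
  simp only [residualQuadric, Fin.sum_univ_three, Fin.succ_zero_eq_one,
    Fin.succ_one_eq_two, Fin.reduceSucc, map_add, pderiv_mul, pderiv_pow, map_mul, map_pow,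
    map_natCast, pderiv_X, Pi.single_apply, Fin.reduceEq, if_true, if_false, map_one, map_zero,
    eval_X]
  ring

lemma eval_pderiv_succ_residualQuadric {R : Type*} [CommRing R] (t : Fin 4 → R) (i : Fin 3) :
    eval t (pderiv i.succ (residualQuadric R)) =
      3 * t 0 + 5 * ∑ i : Fin 3, t i.succ - t i.succ := by
  fin_cases i <;>
  · simp only [residualQuadric, Fin.sum_univ_three, Fin.zero_eta, Fin.mk_one,
      Fin.reduceFinMk, Fin.succ_zero_eq_one, Fin.succ_one_eq_two, Fin.reduceSucc, map_add,
      pderiv_mul, pderiv_pow, map_mul, map_pow, map_natCast, pderiv_X, Pi.single_apply,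
      Fin.reduceEq, if_true, if_false, map_one, map_zero, eval_X]
    ring

variable {K : Type*} [Field K] [CharZero K]

/- Here `s = t₀`, and `k` of the coordinates `t₁`, `t₂`, `t₃` equal `c` while the others vanish. -/
lemma eq_two_of_critical_count {s c : K} {k : ℕ} (hc : c ≠ 0)
    (h₀ : s = 0 ∨ 2 * s + 3 * (k * c) = 0) (h₁ : 3 * s + 5 * (k * c) = c) : k = 2 := by
  have hs : s ≠ 0 := by
    rintro rfl
    have : (5 * k : K) = 1 := mul_right_cancel₀ hc (by linear_combination h₁)
    norm_cast at this
    lia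
  have : (k : K) = 2 :=
    mul_right_cancel₀ hc (by linear_combination 2 * h₁ - 3 * h₀.resolve_left hs)
  exact_mod_cast this

lemma exists_eq_smul_facePoint_of_critical {t : Fin 4 → K} (ht : t ≠ 0)
    (hcrit : ∀ i, t i = 0 ∨ eval t (pderiv i (residualQuadric K)) = 0) :
    ∃ c ≠ (0 : K), ∃ j, t = c • facePoint j fun _ => -(1 / 3) := by
  classical
  set c := 3 * t 0 + 5 * ∑ i : Fin 3, t i.succ with hc_def
  have h₀ : t 0 = 0 ∨ 2 * t 0 + 3 * ∑ i : Fin 3, t i.succ = 0 := by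
    simpa only [eval_pderiv_zero_residualQuadric] using hcrit 0
  have htail : ∀ i : Fin 3, t i.succ = 0 ∨ t i.succ = c := fun i => by
    simpa only [eval_pderiv_succ_residualQuadric, sub_eq_zero, ← hc_def, eq_comm (a := c)]
      using hcrit i.succ
  have hsum := sum_eq_card_ne_zero_mul htail
  have hc : c ≠ 0 := by
    intro hc
    have htail0 : ∀ i : Fin 3, t i.succ = 0 := fun i => by simpa [hc] using htail i
    refine ht (funext (Fin.cases ?_ htail0))
    simpa [hc, htail0] using hc_def
  rw [hsum] at h₀ hc_def
  have hcard := eq_two_of_critical_count hc h₀ hc_def.symm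
  obtain ⟨j, hj⟩ := exists_eq_insertNth_zero_const htail hcard
  have ht0 : t 0 = -3 * c := by
    rw [hcard] at hc_def
    push_cast at hc_def
    linear_combination -(1 / 3) * hc_def
  refine ⟨t 0, by simp [ht0, hc], j, funext (Fin.cases (by simp) fun i => ?_)⟩
  rw [show t i.succ = _ from congrFun hj i]
  induction i using j.succAboveCases
  · simp
  · simp only [Fin.insertNth_apply_succAbove, Pi.smul_apply, facePoint_succ_succAbove, smul_eq_mul,
      ht0]
    ring

lemma residualQuadric_critical_iff (t : Fin 4 → K) :
    (t ≠ 0 ∧ ∀ i, t i = 0 ∨ eval t (pderiv i (residualQuadric K)) = 0) ↔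
      ∃ c ≠ (0 : K), ∃ j, t = c • facePoint j fun _ => -(1 / 3) := by
  refine ⟨fun ⟨ht, hcrit⟩ => exists_eq_smul_facePoint_of_critical ht hcrit, ?_⟩
  rintro ⟨c, hc, j, rfl⟩
  have hsum : ∑ i : Fin 3, (c • facePoint j fun _ => -(1 / 3)) i.succ = -(2 / 3) * c := by
    simp only [Pi.smul_apply, smul_eq_mul, ← Finset.mul_sum, sum_facePoint_succ, Fin.sum_univ_two]
    ring
  refine ⟨smul_ne_zero hc (facePoint_ne_zero j _), Fin.cases (.inr ?_) fun i => ?_⟩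
  · rw [eval_pderiv_zero_residualQuadric, hsum, Pi.smul_apply, facePoint_zero, smul_eq_mul]
    ring
  · rw [eval_pderiv_succ_residualQuadric, hsum]
    induction i using j.succAboveCases
    · simp
    · right
      simp only [Pi.smul_apply, facePoint_zero, facePoint_succ_succAbove, smul_eq_mul]
      ring

theorem gradient_expand_residualQuadric_eq_zero_iff (x : Fin 4 → K) :
    (x ≠ 0 ∧ ∀ i, eval x (pderiv i (expand 3 (residualQuadric K))) = 0) ↔
      ∃ c ≠ (0 : K), ∃ j, ∃ z, (z ^ 3 = fun _ => -(1 / 3)) ∧ x = c • facePoint j z := by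
  rw [← exists_pow_eq_smul_facePoint_iff three_ne_zero, ← residualQuadric_critical_iff]
  refine and_congr (pow_ne_zero_iff three_ne_zero).symm (forall_congr' fun i => ?_)
  exact (eval_pderiv_expand_eq_zero_iff (by simp) (by simp) x i _).trans (by simp)

theorem singularLocus_expand_residualQuadric :
    singularLocus (expand 3 (residualQuadric K)) = facePoints 2 3 (-(1 / 3) : K) := by
  ext p
  constructor
  · rintro ⟨x, hx, rfl, hgrad⟩
    obtain ⟨c, -, j, z, hz, rfl⟩ := (gradient_expand_residualQuadric_eq_zero_iff x).1 ⟨hx, hgrad⟩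
    exact ⟨(j, fun i => ⟨z i, congrFun hz i⟩),
      ((Projectivization.mk_eq_mk_iff' K _ _ _ _).2 ⟨c, rfl⟩).symm⟩
  · rintro ⟨⟨j, z⟩, rfl⟩
    exact ⟨_, facePoint_ne_zero j _, rfl, ((gradient_expand_residualQuadric_eq_zero_iff _).2
      ⟨1, one_ne_zero, j, _, funext fun i => (z i).2, (one_smul _ _).symm⟩).2⟩

end Quadric

section ResidualSextic

lemma eval_fermatR (x : Fin 4 → ℂ) : eval x fermatR = ∑ i, x i ^ 3 := by
  simp [fermatR, Fin.sum_univ_four]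

lemma fermatR_ne_zero : fermatR ≠ 0 := by
  intro h
  simpa [h, Fin.sum_univ_four] using eval_fermatR ![1, 0, 0, 0]

lemma eq_expand_residualQuadric {B6 : MvPolynomial (Fin 4) ℂ}
    (hB6 : fermatR * B6 = fermatS1 * fermatS2 * fermatS3 - fermatQ ^ 3) :
    B6 = expand 3 (residualQuadric ℂ) := by
  apply mul_left_cancel₀ fermatR_ne_zero
  rw [hB6]
  simp only [fermatS1, fermatS2, fermatS3, fermatQ, fermatR, residualQuadric, map_add,
    map_pow, map_mul, expand_X]
  ring

lemma eval_fermatR_smul_facePoint {c : ℂ} {j : Fin 3} {z : Fin 2 → ℂ}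
    (hz : z ^ 3 = fun _ => -(1 / 3)) : eval (c • facePoint j z) fermatR = c ^ 3 / 3 := by
  have hsum : ∑ i, (facePoint j z ^ 3) i = 1 / 3 := by
    rw [facePoint_pow three_ne_zero, hz, Fin.sum_univ_succ, facePoint_zero, sum_facePoint_succ]
    norm_num
  calc eval (c • facePoint j z) fermatR
      _ = c ^ 3 * ∑ i, (facePoint j z ^ 3) i := by
        simp [eval_fermatR, mul_pow, Finset.mul_sum]
      _ = c ^ 3 / 3 := by rw [hsum, mul_one_div]

end ResidualSextic

/-- The singular locus of the residual sextic `B₆` (the unique polynomial with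
`R·B₆ = S₁·S₂·S₃ − S³`) consists exactly of the `27` points represented by
`(1,0,a,b)`, `(1,a,0,b)`, `(1,a,b,0)` with `a³ = b³ = −1/3`; there are exactly `27`
of them and none lies on the Fermat cubic `R = 0`. -/
theorem sing_residual_sextic (B6 : MvPolynomial (Fin 4) ℂ)
    (hB6 : fermatR * B6 = fermatS1 * fermatS2 * fermatS3 - fermatQ ^ 3) :
    ({p : Projectivization ℂ (Fin 4 → ℂ) |
        ∃ (x : Fin 4 → ℂ) (hx : x ≠ 0), Projectivization.mk ℂ x hx = p ∧
          ∀ i : Fin 4, eval x (pderiv i B6) = 0}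
      = {p : Projectivization ℂ (Fin 4 → ℂ) |
          ∃ (x : Fin 4 → ℂ) (hx : x ≠ 0), Projectivization.mk ℂ x hx = p ∧
            ∃ a b : ℂ, a ^ 3 = -(1/3) ∧ b ^ 3 = -(1/3) ∧
              (x = ![1, 0, a, b] ∨ x = ![1, a, 0, b] ∨ x = ![1, a, b, 0])}) ∧
    {p : Projectivization ℂ (Fin 4 → ℂ) |
        ∃ (x : Fin 4 → ℂ) (hx : x ≠ 0), Projectivization.mk ℂ x hx = p ∧
          ∀ i : Fin 4, eval x (pderiv i B6) = 0}.ncard = 27 ∧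
    ∀ x : Fin 4 → ℂ, x ≠ 0 → (∀ i : Fin 4, eval x (pderiv i B6) = 0) →
      eval x fermatR ≠ 0 := by
  obtain rfl := eq_expand_residualQuadric hB6
  have hsing := singularLocus_expand_residualQuadric (K := ℂ)
  refine ⟨hsing.trans (facePoints_two 3 _), ?_, fun x hx hgrad => ?_⟩
  · calc (singularLocus (expand 3 (residualQuadric ℂ))).ncard
      _ = (2 + 1) * 3 ^ 2 := by rw [hsing, ncard_facePoints 2 (by simp) (by simp)]
      _ = 27 := by norm_num
  · obtain ⟨c, hc, j, z, hz, rfl⟩ :=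
      (gradient_expand_residualQuadric_eq_zero_iff x).1 ⟨hx, hgrad⟩
    rw [eval_fermatR_smul_facePoint hz]
    exact div_ne_zero (pow_ne_zero 3 hc) three_ne_zero
end

section
/- The complex vector space of homogeneous polynomials of degree 4 in ℂ[z₀,z₁,z₂,z₃] that vanish at every singular point of the surface G = 0 has dimension 5 (equivalently, the 36 singular points impose exactly 30 independent linear conditions on the 35-dimensional space of quartic forms). -/
open MvPolynomial

/-- The cubic form `A = (8/9)z₀³ + (8/9)z₁³ − (64/63)z₂³ + (1/63)z₃³`. -/
noncomputable def labsA : MvPolynomial (Fin 4) ℂ :=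
  C (8/9 : ℂ) * X 0 ^ 3 + C (8/9 : ℂ) * X 1 ^ 3 - C (64/63 : ℂ) * X 2 ^ 3 + C (1/63 : ℂ) * X 3 ^ 3

/-- The cubic form `B = (1/9)z₀³ + (1/9)z₁³ + (1/63)z₂³ − (1/63)z₃³`. -/
noncomputable def labsB : MvPolynomial (Fin 4) ℂ :=
  C (1/9 : ℂ) * X 0 ^ 3 + C (1/9 : ℂ) * X 1 ^ 3 + C (1/63 : ℂ) * X 2 ^ 3 - C (1/63 : ℂ) * X 3 ^ 3

/-- The `36`-cuspidal sextic of Labs, `G = (z₀z₁)³ − A·B`. -/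
noncomputable def labsG : MvPolynomial (Fin 4) ℂ := (X 0 * X 1) ^ 3 - labsA * labsB
/-- The space of homogeneous quartic forms vanishing at every singular point of the
Labs sextic `G = 0`. -/
noncomputable def quarticsThroughLabsCusps : Submodule ℂ (MvPolynomial (Fin 4) ℂ) :=
  homogeneousSubmodule (Fin 4) ℂ 4 ⊓
    ⨅ (z : Fin 4 → ℂ) (_ : z ≠ 0 ∧ ∀ i : Fin 4, eval z (pderiv i labsG) = 0),
      LinearMap.ker (aeval z : MvPolynomial (Fin 4) ℂ →ₐ[ℂ] ℂ).toLinearMap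

/-!
The sextic is a quadratic form `q` in the cubes `zᵢ³`, so `∂G/∂zᵢ` is a multiple of
`zᵢ² · (∂q/∂yᵢ)(z³)`, and the four quartics `zᵢ · (∂q/∂yᵢ)(z³)` vanish at all singular points. So
does `z₀z₁z₂z₃`: if no `zᵢ` is zero then all `∂q/∂yᵢ` vanish at `z³`, but `q` is nondegenerate.

Conversely, the quadric `q = 0` is tangent to each coordinate plane `yₖ = 0`, at the point `vₖ`
given by column `k` of the inverse of the Gram matrix `M` of `q`. Every `z` with `z³ = vₖ` is a
singular point. These points are permuted by multiplying coordinates by cube roots of unity, so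
the part of a quartic `f` with given exponents modulo `3` vanishes at them too. That part is
either a single monomial, which misses some variable `zₖ` unless it is `z₀z₁z₂z₃` and then does not
vanish where `z³ = vₖ`, or it is `zᵢ ∑ⱼ aᵢⱼ zⱼ³`. In the latter case row `i` of `a` is orthogonal
to `vₖ` for all `k ≠ i`, that is, `a M⁻¹` is diagonal, so row `i` of `a` is a multiple of row `i`
of `M`.

The same argument applies to `m`-th powers of `m + 1` variables and forms of degree `m + 1`.
-/

open Finsupp (single)
open scoped Matrix

section Exponents

variable {ι : Type*} {m : ℕ}

lemma eq_of_forall_modEq_of_forall_lt {d e : ι →₀ ℕ} (h : ∀ i, d i ≡ e i [MOD m])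
    (hd : ∀ i, d i < m) (he : ∀ i, e i < m) : d = e :=
  Finsupp.ext fun i => (h i).eq_of_lt_of_lt (hd i) (he i)

lemma single_one_lt (hm : 2 ≤ m) (i k : ι) : single i 1 k < m := by
  classical
  rw [Finsupp.single_apply]
  split_ifs <;> lia

lemma single_one_add_single_modEq (i j k : ι) :
    (single i 1 + single j m : ι →₀ ℕ) k ≡ single i 1 k [MOD m] := by
  classical
  rw [Finsupp.add_apply, Finsupp.single_apply (a := j)]
  split_ifs <;> simp [Nat.ModEq]

lemma exists_eq_single_one_add_single {d : ι →₀ ℕ} (hd : d.degree = m + 1) {j : ι}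
    (hj : m ≤ d j) : ∃ i, d = single i 1 + single j m := by
  obtain ⟨e, rfl⟩ := exists_add_of_le (Finsupp.single_le_iff.mpr hj)
  have he : e.degree = 1 := by
    rw [map_add, Finsupp.degree_single] at hd
    lia
  obtain ⟨i, rfl⟩ : e ∈ Set.range fun i : ι => single i 1 := by
    rwa [Finsupp.range_single_one]
  exact ⟨i, add_comm _ _⟩

lemma single_one_add_single_inj (hm : 2 ≤ m) {i i' j j' : ι} :
    single i 1 + single j m = single i' 1 + single j' m ↔ i = i' ∧ j = j' := by
  refine ⟨fun h => ?_, by rintro ⟨rfl, rfl⟩; rfl⟩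
  have hi : i = i' := by
    refine Finsupp.single_left_injective one_ne_zero
      (eq_of_forall_modEq_of_forall_lt (m := m) (fun k => ?_) (single_one_lt hm i)
        (single_one_lt hm i'))
    exact (single_one_add_single_modEq i j k).symm.trans
      (h ▸ single_one_add_single_modEq i' j' k)
  subst hi
  exact ⟨rfl, Finsupp.single_left_injective (by lia : m ≠ 0) (add_left_cancel h)⟩

lemma exists_eq_single_one_add_single_of_modEq (hm : 2 ≤ m) {d : ι →₀ ℕ}
    (hd : d.degree = m + 1) {i : ι} (h : ∀ k, d k ≡ single i 1 k [MOD m]) :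
    ∃ j, d = single i 1 + single j m := by
  by_cases hlt : ∀ k, d k < m
  · rw [eq_of_forall_modEq_of_forall_lt h hlt (single_one_lt hm i), Finsupp.degree_single] at hd
    lia
  · push Not at hlt
    obtain ⟨j, hj⟩ := hlt
    obtain ⟨i', rfl⟩ := exists_eq_single_one_add_single hd hj
    have hi : single i' 1 = single i 1 :=
      eq_of_forall_modEq_of_forall_lt
        (fun k => (single_one_add_single_modEq i' j k).symm.trans (h k))
        (single_one_lt hm i') (single_one_lt hm i)
    exact ⟨j, by rw [hi]⟩

lemma eq_of_forall_modEq_of_degree_eq (hm : 2 ≤ m) {d e : ι →₀ ℕ} (hd : d.degree = m + 1)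
    (he : e.degree = m + 1) (hlt : ∀ i, e i < m) (h : ∀ i, d i ≡ e i [MOD m]) : d = e := by
  refine eq_of_forall_modEq_of_forall_lt h ?_ hlt
  by_contra! ⟨j, hj⟩
  obtain ⟨i, rfl⟩ := exists_eq_single_one_add_single hd hj
  have hi : e = single i 1 :=
    eq_of_forall_modEq_of_forall_lt
      (fun k => (h k).symm.trans (single_one_add_single_modEq i j k)) hlt (single_one_lt hm i)
  rw [hi, Finsupp.degree_single] at he
  lia

lemma forall_eq_one_of_degree_eq_card [Fintype ι] {d : ι →₀ ℕ}
    (hd : d.degree = Fintype.card ι) (hpos : ∀ i, d i ≠ 0) (i : ι) : d i = 1 := by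
  have hsum : ∑ _i : ι, 1 = ∑ i, d i := by
    rw [← Finsupp.degree_eq_sum, hd, Fintype.card_eq_sum_ones]
  exact ((Finset.sum_eq_sum_iff_of_le fun i _ => Nat.one_le_iff_ne_zero.mpr (hpos i)).mp hsum i
    (Finset.mem_univ i)).symm

end Exponents

lemma sum_fiber_eq_zero_of_linearIndependent {R M κ τ : Type*} [Ring R] [AddCommGroup M]
    [Module R M] [DecidableEq κ] {v : κ → M} (hv : LinearIndependent R v) {s : Finset τ} {a : τ → R}
    {g : τ → κ} (h : ∑ t ∈ s, a t • v (g t) = 0) (k : κ) : ∑ t ∈ s with g t = k, a t = 0 := by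
  have hl := linearIndependent_iff.mp hv (∑ t ∈ s, single (g t) (a t)) (by simpa using h)
  simpa [Finsupp.finsetSum_apply, Finsupp.single_apply, Finset.sum_filter] using
    DFunLike.congr_fun hl k

section RootsOfUnity

variable {ι R : Type*} [Fintype ι] [CommRing R] {m : ℕ}

/-- The character by which the group of `ι`-tuples of `m`-th roots of unity, acting on the
coordinates by multiplication, acts on the monomial with exponent vector `d`. -/
def monomialCharacter (m : ℕ) (d : ι →₀ ℕ) : (ι → rootsOfUnity m R) →* R where
  toFun ζ := ∏ i, ((ζ i : Rˣ) : R) ^ d i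
  map_one' := by simp
  map_mul' ζ ξ := by simp [mul_pow, Finset.prod_mul_distrib]

lemma monomialCharacter_eq_iff [NeZero m] [HasEnoughRootsOfUnity R m] {d e : ι →₀ ℕ} :
    monomialCharacter (R := R) m d = monomialCharacter m e ↔ ∀ i, d i ≡ e i [MOD m] := by
  classical
  refine ⟨fun h i => ?_, fun h => MonoidHom.ext fun ζ => Finset.prod_congr rfl fun i _ => ?_⟩
  · obtain ⟨ω, hω⟩ := HasEnoughRootsOfUnity.exists_primitiveRoot R m
    have hpow (d : ι →₀ ℕ) :
        monomialCharacter m d (Pi.mulSingle i hω.toRootsOfUnity) = ω ^ d i := by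
      simp only [monomialCharacter, MonoidHom.coe_mk, OneHom.coe_mk]
      rw [Finset.prod_eq_single i]
      · simp
      · intro j _ hj
        simp [hj]
      · simp
    have hfin : IsOfFinOrder ω := isOfFinOrder_iff_pow_eq_one.mpr
      ⟨m, NeZero.pos m, hω.pow_eq_one⟩
    rw [hω.eq_orderOf, ← hfin.pow_eq_pow_iff_modEq, ← hpow, ← hpow, h]
  · exact pow_eq_pow_of_modEq (h i) ((mem_rootsOfUnity' m _).mp (ζ i).2)

-- Dedekind's independence of characters separates the residue classes of exponent vectors.
lemma sum_coeff_mul_prod_pow_eq_zero_of_modEq [IsDomain R] [NeZero m] [HasEnoughRootsOfUnity R m]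
    {f : MvPolynomial ι R} {z : ι → R} (hz : ∀ w : ι → R, w ^ m = z ^ m → eval w f = 0)
    {e : ι →₀ ℕ} {s : Finset (ι →₀ ℕ)} (hs : ∀ d ∈ s, ∀ i, d i ≡ e i [MOD m])
    (hfs : ∀ d ∈ f.support, (∀ i, d i ≡ e i [MOD m]) → d ∈ s) :
    ∑ d ∈ s, coeff d f * ∏ i, z i ^ d i = 0 := by
  classical
  have hcharacters : ∑ d ∈ f.support, (coeff d f * ∏ i, z i ^ d i) •
      (monomialCharacter m d : (ι → rootsOfUnity m R) → R) = 0 := by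
    ext ζ
    have hζ := hz (fun i => z i * ((ζ i : Rˣ) : R)) <| by
      ext i
      have hroot : ((ζ i : Rˣ) : R) ^ m = 1 := (mem_rootsOfUnity' m _).mp (ζ i).2
      simp [mul_pow, hroot]
    rw [eval_eq'] at hζ
    simpa [monomialCharacter, mul_pow, Finset.prod_mul_distrib, mul_assoc] using hζ
  have hclass : ∑ d ∈ f.support with ∀ i, d i ≡ e i [MOD m],
      coeff d f * ∏ i, z i ^ d i = 0 := by
    simpa only [monomialCharacter_eq_iff] using
      sum_fiber_eq_zero_of_linearIndependent
        (linearIndependent_monoidHom (ι → rootsOfUnity m R) R) hcharacters (monomialCharacter m e)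
  rw [← hclass]
  refine (Finset.sum_subset (fun d hd => ?_) fun d hd hd' => ?_).symm
  · exact hfs d (Finset.mem_filter.mp hd).1 (Finset.mem_filter.mp hd).2
  · have hcoeff : coeff d f = 0 := by
      by_contra hne
      exact hd' (Finset.mem_filter.mpr ⟨mem_support_iff.mpr hne, hs d hd⟩)
    rw [hcoeff, zero_mul]

end RootsOfUnity

section ProductOfVariables

variable {ι R : Type*} [Fintype ι] [CommSemiring R]

lemma isHomogeneous_prod_X : (∏ i : ι, X i : MvPolynomial ι R).IsHomogeneous (Fintype.card ι) := by
  simpa using IsHomogeneous.prod Finset.univ _ _ fun i _ => isHomogeneous_X R i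

lemma coeff_prod_X (d : ι →₀ ℕ) [Decidable (∀ i, d i = 1)] :
    coeff d (∏ i, X i : MvPolynomial ι R) = if ∀ i, d i = 1 then 1 else 0 := by
  classical
  have : (∏ i, X i : MvPolynomial ι R) = monomial (Finsupp.equivFunOnFinite.symm 1) 1 := by
    simp [monomial_eq, Finsupp.prod_fintype]
  rw [this, coeff_monomial]
  simp [DFunLike.ext_iff, eq_comm]

end ProductOfVariables

section PowerCoeffs

variable {ι R : Type*} [CommSemiring R] {m : ℕ}

/-- The matrix of coefficients of `f` at the monomials `X i * X j ^ m`. -/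
noncomputable def powerCoeffs (m : ℕ) (f : MvPolynomial ι R) : Matrix ι ι R :=
  Matrix.of fun i j => coeff (single i 1 + single j m) f

lemma eq_of_powerCoeffs_eq {f g : MvPolynomial ι R} (hf : f.IsHomogeneous (m + 1))
    (hg : g.IsHomogeneous (m + 1)) (hfg : powerCoeffs m f = powerCoeffs m g)
    (hlt : ∀ d : ι →₀ ℕ, d.degree = m + 1 → (∀ i, d i < m) → coeff d f = coeff d g) : f = g := by
  ext d
  by_cases hd : d.degree = m + 1
  · by_cases hd' : ∀ i, d i < m
    · exact hlt d hd hd'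
    · push Not at hd'
      obtain ⟨j, hj⟩ := hd'
      obtain ⟨i, rfl⟩ := exists_eq_single_one_add_single hd hj
      exact congrFun₂ hfg i j
  · rw [hf.coeff_eq_zero hd, hg.coeff_eq_zero hd]

end PowerCoeffs

section PowerQuadric

variable {ι R : Type*} [CommRing R]

/-- The space of forms of degree `n` that vanish at every singular point of the projective
hypersurface `F = 0`, that is, at every `z ≠ 0` where all partial derivatives of `F` vanish. -/
noncomputable def formsThroughSingularPoints (n : ℕ) (F : MvPolynomial ι R) :
    Submodule R (MvPolynomial ι R) :=
  homogeneousSubmodule ι R n ⊓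
    ⨅ (z : ι → R) (_ : z ≠ 0 ∧ ∀ i, eval z (pderiv i F) = 0),
      LinearMap.ker (aeval z : MvPolynomial ι R →ₐ[R] R).toLinearMap

lemma mem_formsThroughSingularPoints {n : ℕ} {F f : MvPolynomial ι R} :
    f ∈ formsThroughSingularPoints n F ↔ f.IsHomogeneous n ∧
      ∀ z : ι → R, z ≠ 0 → (∀ i, eval z (pderiv i F) = 0) → eval z f = 0 := by
  simp [formsThroughSingularPoints, aeval_eq_eval]

variable [Fintype ι] {m : ℕ} {M : Matrix ι ι R}

/-- The pull-back of the quadratic form with Gram matrix `M` under the map raising every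
coordinate to the `m`-th power. -/
noncomputable def powerQuadric (m : ℕ) (M : Matrix ι ι R) : MvPolynomial ι R :=
  ∑ i, ∑ j, C (M i j) * (X i ^ m * X j ^ m)

/-- The `i`-th partial derivative of `powerQuadric m M` for symmetric `M`, with the factor
`2 * m * X i ^ (m - 1)` replaced by `X i`. -/
noncomputable def reducedPolar (m : ℕ) (M : Matrix ι ι R) (i : ι) : MvPolynomial ι R :=
  X i * ∑ j, C (M i j) * X j ^ m

lemma eval_pderiv_powerQuadric (hM : M.IsSymm) (z : ι → R) (k : ι) :
    eval z (pderiv k (powerQuadric m M)) = 2 * m * (z k ^ (m - 1) * (M *ᵥ z ^ m) k) := by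
  classical
  have hterm (i j : ι) : eval z (pderiv k (C (M i j) * (X i ^ m * X j ^ m))) =
      (if i = k then m * (z k ^ (m - 1) * (M k j * z j ^ m)) else 0) +
        if j = k then m * (z k ^ (m - 1) * (M k i * z i ^ m)) else 0 := by
    rw [pderiv_C_mul, pderiv_mul, pderiv_pow, pderiv_pow, pderiv_X, pderiv_X]
    by_cases hi : i = k <;> by_cases hj : j = k <;>
      simp [hi, hj, hM.apply k] <;> ring
  simp only [powerQuadric, map_sum, hterm, Finset.sum_add_distrib, Finset.sum_ite_eq',
    Finset.sum_ite_irrel, Finset.sum_const_zero, Finset.mem_univ, if_true, ← Finset.mul_sum,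
    Matrix.mulVec, dotProduct, Pi.pow_apply]
  ring

lemma eval_pderiv_powerQuadric_eq_zero_iff [IsDomain R] [NeZero (2 : R)] [NeZero (m : R)]
    (hm : 2 ≤ m) (hM : M.IsSymm) {z : ι → R} {k : ι} :
    eval z (pderiv k (powerQuadric m M)) = 0 ↔ z k = 0 ∨ (M *ᵥ z ^ m) k = 0 := by
  rw [eval_pderiv_powerQuadric hM, mul_eq_zero_iff_left (mul_ne_zero (NeZero.ne _) (NeZero.ne _)),
    mul_eq_zero, pow_eq_zero_iff (by lia)]

lemma eval_reducedPolar (z : ι → R) (i : ι) :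
    eval z (reducedPolar m M i) = z i * (M *ᵥ z ^ m) i := by
  simp [reducedPolar, Matrix.mulVec, dotProduct]

lemma reducedPolar_eq_sum_monomial (i : ι) : reducedPolar m M i =
    ∑ j, monomial (single i 1 + single j m) (M i j) := by
  rw [reducedPolar, Finset.mul_sum]
  refine Finset.sum_congr rfl fun j _ => ?_
  rw [X_pow_eq_monomial, C_mul_monomial, X, monomial_mul, one_mul, mul_one]

lemma isHomogeneous_reducedPolar (i : ι) : (reducedPolar m M i).IsHomogeneous (m + 1) := by
  rw [reducedPolar_eq_sum_monomial]
  refine IsHomogeneous.sum _ _ _ fun j _ => isHomogeneous_monomial _ ?_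
  rw [map_add, Finsupp.degree_single, Finsupp.degree_single, add_comm]

lemma reducedPolar_mem_formsThroughSingularPoints [IsDomain R] [NeZero (2 : R)] [NeZero (m : R)]
    (hm : 2 ≤ m) (hM : M.IsSymm) (i : ι) :
    reducedPolar m M i ∈ formsThroughSingularPoints (m + 1) (powerQuadric m M) := by
  refine mem_formsThroughSingularPoints.mpr ⟨isHomogeneous_reducedPolar i, fun z _ hz => ?_⟩
  rw [eval_reducedPolar, mul_eq_zero]
  exact (eval_pderiv_powerQuadric_eq_zero_iff hm hM).mp (hz i)

lemma prod_X_mem_formsThroughSingularPoints [DecidableEq ι] [IsDomain R] [NeZero (2 : R)]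
    [NeZero (m : R)] (hm : 2 ≤ m) (hM : M.IsSymm) (hunit : IsUnit M) :
    ∏ i, X i ∈ formsThroughSingularPoints (Fintype.card ι) (powerQuadric m M) := by
  refine mem_formsThroughSingularPoints.mpr ⟨isHomogeneous_prod_X, fun z hz hsing => ?_⟩
  by_contra hne
  rw [map_prod, ← ne_eq, Finset.prod_ne_zero_iff] at hne
  have hker : M *ᵥ z ^ m = 0 := funext fun i =>
    ((eval_pderiv_powerQuadric_eq_zero_iff hm hM).mp (hsing i)).resolve_left
      (by simpa using hne i (Finset.mem_univ i))
  have hpow : z ^ m = 0 :=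
    Matrix.mulVec_injective_of_isUnit hunit (by rw [hker, Matrix.mulVec_zero])
  exact hz ((pow_eq_zero_iff (by lia)).mp hpow)

/-- The map sending `(a, b)` to the linear combination with coefficients `a` and `b` of the reduced
polars and of the product of all variables. -/
noncomputable def polarCombination (m : ℕ) (M : Matrix ι ι R) :
    (ι → R) × R →ₗ[R] MvPolynomial ι R :=
  (Fintype.linearCombination R (reducedPolar m M)).coprod
    (LinearMap.toSpanSingleton R _ (∏ i, X i))

lemma polarCombination_apply (a : ι → R) (b : R) :
    polarCombination m M (a, b) = ∑ i, a i • reducedPolar m M i + b • ∏ i, X i := by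
  simp [polarCombination, Fintype.linearCombination_apply]

lemma coeff_reducedPolar_of_forall_lt {d : ι →₀ ℕ} (hd : ∀ i, d i < m) (i : ι) :
    coeff d (reducedPolar m M i) = 0 := by
  classical
  rw [reducedPolar_eq_sum_monomial, coeff_sum]
  refine Finset.sum_eq_zero fun j _ => ?_
  rw [coeff_monomial, if_neg]
  rintro rfl
  simpa using hd j

lemma coeff_single_one_add_single_reducedPolar [DecidableEq ι] (hm : 2 ≤ m) (i j k : ι) :
    coeff (single i 1 + single j m) (reducedPolar m M k) =
      if k = i then M i j else 0 := by
  rw [reducedPolar_eq_sum_monomial, coeff_sum]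
  simp only [coeff_monomial, single_one_add_single_inj hm]
  by_cases hk : k = i <;> simp [hk]

lemma powerCoeffs_polarCombination [DecidableEq ι] (hm : 2 ≤ m) (a : ι → R) (b : R) :
    powerCoeffs m (polarCombination m M (a, b)) = Matrix.diagonal a * M := by
  ext i j
  have hprod :
      coeff (single i 1 + single j m) (∏ i, X i : MvPolynomial ι R) = 0 := by
    classical
    rw [coeff_prod_X, if_neg]
    intro h
    have hj : single i 1 j + m = 1 := by simpa using h j
    lia
  simp [powerCoeffs, polarCombination_apply, coeff_sum, coeff_smul,
    coeff_single_one_add_single_reducedPolar hm, hprod, Matrix.diagonal_mul]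

lemma coeff_polarCombination_of_forall_lt {d : ι →₀ ℕ} [Decidable (∀ i, d i = 1)]
    (hd : ∀ i, d i < m) (a : ι → R) (b : R) :
    coeff d (polarCombination m M (a, b)) = if ∀ i, d i = 1 then b else 0 := by
  simp [polarCombination_apply, coeff_sum, coeff_smul, coeff_reducedPolar_of_forall_lt hd,
    coeff_prod_X]

lemma mul_powerCoeffs_mulVec_pow_eq_zero [IsDomain R] [NeZero m] [HasEnoughRootsOfUnity R m]
    (hm : 2 ≤ m) {f : MvPolynomial ι R} (hf : f.IsHomogeneous (m + 1)) {z : ι → R}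
    (hz : ∀ w : ι → R, w ^ m = z ^ m → eval w f = 0) (i : ι) :
    z i * (powerCoeffs m f *ᵥ z ^ m) i = 0 := by
  classical
  have hprod (j : ι) :
      ∏ k, z k ^ (single i 1 + single j m : ι →₀ ℕ) k = z i * z j ^ m := by
    simp only [Finsupp.add_apply, pow_add, Finset.prod_mul_distrib]
    simp [Finsupp.single_apply, pow_ite]
  have hinj : Function.Injective fun j : ι => single i 1 + single j m :=
    fun _ _ h => ((single_one_add_single_inj hm).mp h).2
  calc z i * (powerCoeffs m f *ᵥ z ^ m) i
      = ∑ j, coeff (single i 1 + single j m) f * (z i * z j ^ m) := by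
        simp only [Matrix.mulVec, dotProduct, powerCoeffs, Matrix.of_apply, Pi.pow_apply,
          Finset.mul_sum, mul_left_comm]
    _ = ∑ d ∈ Finset.univ.image fun j => single i 1 + single j m,
          coeff d f * ∏ k, z k ^ d k := by
        rw [Finset.sum_image hinj.injOn]
        exact Finset.sum_congr rfl fun j _ => by rw [hprod]
    _ = 0 := by
        refine sum_coeff_mul_prod_pow_eq_zero_of_modEq hz (e := single i 1) ?_ ?_
        · simpa using single_one_add_single_modEq i
        · intro d hd hmod
          obtain ⟨j, rfl⟩ := exists_eq_single_one_add_single_of_modEq hm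
            (hf.degree_eq_sum_deg_support hd).symm hmod
          exact Finset.mem_image_of_mem _ (Finset.mem_univ j)

lemma coeff_mul_prod_pow_eq_zero [IsDomain R] [NeZero m] [HasEnoughRootsOfUnity R m] (hm : 2 ≤ m)
    {f : MvPolynomial ι R} (hf : f.IsHomogeneous (m + 1)) {z : ι → R}
    (hz : ∀ w : ι → R, w ^ m = z ^ m → eval w f = 0) {d : ι →₀ ℕ} (hd : d.degree = m + 1)
    (hlt : ∀ i, d i < m) : coeff d f * ∏ i, z i ^ d i = 0 := by
  rw [← Finset.sum_singleton (fun d : ι →₀ ℕ => coeff d f * ∏ i, z i ^ d i) d]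
  refine sum_coeff_mul_prod_pow_eq_zero_of_modEq hz (e := d) (by simp [Nat.ModEq.refl])
    fun c hc hmod => ?_
  exact Finset.mem_singleton.mpr
    (eq_of_forall_modEq_of_degree_eq hm (hf.degree_eq_sum_deg_support hc).symm hd hlt hmod)

lemma polarCombination_injective [DecidableEq ι] (hm : 2 ≤ m) (hM : IsUnit M) :
    Function.Injective (polarCombination m M) := by
  rintro ⟨a, b⟩ ⟨a', b'⟩ h
  have ha : a = a' := by
    have hcoeffs := congrArg (powerCoeffs m) h
    rw [powerCoeffs_polarCombination hm, powerCoeffs_polarCombination hm] at hcoeffs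
    exact Matrix.diagonal_injective (hM.mul_right_cancel hcoeffs)
  have hb : b = b' := by
    have hlt (i : ι) : Finsupp.equivFunOnFinite.symm (1 : ι → ℕ) i < m := hm
    have hcoeff := congrArg (coeff (Finsupp.equivFunOnFinite.symm 1)) h
    rw [coeff_polarCombination_of_forall_lt hlt, coeff_polarCombination_of_forall_lt hlt] at hcoeff
    simpa using hcoeff
  rw [ha, hb]

end PowerQuadric

lemma exists_pi_pow_eq {ι K : Type*} [Field K] [IsAlgClosed K] {m : ℕ} (hm : m ≠ 0) (u : ι → K) :
    ∃ z : ι → K, z ^ m = u := by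
  choose z hz using fun i => IsAlgClosed.exists_pow_nat_eq (u i) (Nat.pos_of_ne_zero hm)
  exact ⟨z, funext hz⟩

section Tangency

variable {ι K : Type*} [Fintype ι] [Field K] {m : ℕ} {M N : Matrix ι ι K}
variable [DecidableEq ι] [NeZero (2 : K)] [NeZero (m : K)]

lemma eval_eq_zero_of_pow_eq_col (hm : 2 ≤ m) (hM : M.IsSymm) (hMN : M * N = 1) {k : ι}
    (hdiag : N k k = 0) {n : ℕ} {f : MvPolynomial ι K}
    (hf : f ∈ formsThroughSingularPoints n (powerQuadric m M)) {z : ι → K}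
    (hz : z ^ m = N.col k) : eval z f = 0 := by
  have hm0 : m ≠ 0 := by lia
  have hpolar : M *ᵥ z ^ m = Pi.single k 1 := by
    rw [hz, ← Matrix.mulVec_single_one, Matrix.mulVec_mulVec, hMN, Matrix.one_mulVec]
  refine (mem_formsThroughSingularPoints.mp hf).2 z ?_ fun i => ?_
  · rintro rfl
    simpa [zero_pow hm0] using congrFun hpolar k
  · rw [eval_pderiv_powerQuadric_eq_zero_iff hm hM, hpolar]
    obtain rfl | hik := eq_or_ne i k
    · have : z i ^ m = 0 := by simpa [hdiag] using congrFun hz i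
      exact Or.inl (pow_eq_zero_iff hm0 |>.mp this)
    · exact Or.inr (Pi.single_eq_of_ne hik 1)

variable [IsAlgClosed K]

lemma isDiag_powerCoeffs_mul (hm : 2 ≤ m) (hM : M.IsSymm) (hMN : M * N = 1)
    (hN : ∀ i k, N i k = 0 ↔ i = k) {f : MvPolynomial ι K}
    (hf : f ∈ formsThroughSingularPoints (m + 1) (powerQuadric m M)) :
    (powerCoeffs m f * N).IsDiag := by
  intro i k hik
  have : NeZero m := ⟨by lia⟩
  obtain ⟨z, hz⟩ := exists_pi_pow_eq (NeZero.ne m) (N.col k)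
  have hzi : z i ≠ 0 :=
    (pow_ne_zero_iff (NeZero.ne m)).mp ((congrFun hz i).trans_ne (mt (hN i k).mp hik))
  have hrow := mul_powerCoeffs_mulVec_pow_eq_zero hm (mem_formsThroughSingularPoints.mp hf).1
    (fun w hw => eval_eq_zero_of_pow_eq_col hm hM hMN ((hN k k).mpr rfl) hf (hw.trans hz)) i
  rw [hz] at hrow
  exact (mul_eq_zero.mp hrow).resolve_left hzi

lemma coeff_eq_zero_of_forall_lt (hm : 2 ≤ m) (hM : M.IsSymm) (hMN : M * N = 1)
    {k : ι} (hN : ∀ i, N i k = 0 ↔ i = k) {f : MvPolynomial ι K}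
    (hf : f ∈ formsThroughSingularPoints (m + 1) (powerQuadric m M)) {d : ι →₀ ℕ}
    (hd : d.degree = m + 1) (hlt : ∀ i, d i < m) (hk : d k = 0) : coeff d f = 0 := by
  have : NeZero m := ⟨by lia⟩
  obtain ⟨z, hz⟩ := exists_pi_pow_eq (NeZero.ne m) (N.col k)
  have hprod := coeff_mul_prod_pow_eq_zero hm (mem_formsThroughSingularPoints.mp hf).1
    (fun w hw => eval_eq_zero_of_pow_eq_col hm hM hMN ((hN k).mpr rfl) hf (hw.trans hz)) hd hlt
  refine (mul_eq_zero.mp hprod).resolve_right (Finset.prod_ne_zero_iff.mpr fun i _ => ?_)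
  obtain rfl | hik := eq_or_ne i k
  · simp [hk]
  · exact pow_ne_zero _
      ((pow_ne_zero_iff (NeZero.ne m)).mp ((congrFun hz i).trans_ne (mt (hN i).mp hik)))

theorem range_polarCombination (hm : 2 ≤ m) (hcard : Fintype.card ι = m + 1) (hM : M.IsSymm)
    (hMN : M * N = 1) (hN : ∀ i k, N i k = 0 ↔ i = k) :
    LinearMap.range (polarCombination m M) =
      formsThroughSingularPoints (m + 1) (powerQuadric m M) := by
  have hmem (a : ι → K) (b : K) :
      polarCombination m M (a, b) ∈ formsThroughSingularPoints (m + 1) (powerQuadric m M) := by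
    rw [polarCombination_apply]
    exact add_mem
      (sum_mem fun i _ =>
        Submodule.smul_mem _ _ (reducedPolar_mem_formsThroughSingularPoints hm hM i))
      (Submodule.smul_mem _ _ (hcard ▸ prod_X_mem_formsThroughSingularPoints hm hM
        (IsUnit.of_mul_eq_one _ hMN)))
  refine le_antisymm (by rintro _ ⟨⟨a, b⟩, rfl⟩; exact hmem a b) fun f hf => ?_
  refine ⟨((powerCoeffs m f * N).diag, coeff (Finsupp.equivFunOnFinite.symm 1) f), ?_⟩
  refine eq_of_powerCoeffs_eq (mem_formsThroughSingularPoints.mp (hmem _ _)).1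
    (mem_formsThroughSingularPoints.mp hf).1 ?_ fun d hd hlt => ?_
  · rw [powerCoeffs_polarCombination hm,
      (isDiag_powerCoeffs_mul hm hM hMN hN hf).diagonal_diag, Matrix.mul_assoc,
      mul_eq_one_comm.mp hMN, Matrix.mul_one]
  · rw [coeff_polarCombination_of_forall_lt hlt]
    split_ifs with hone
    · congr 1
      ext i
      exact (hone i).symm
    · obtain ⟨k, hk⟩ : ∃ k, d k = 0 := by
        by_contra! hpos
        exact hone (forall_eq_one_of_degree_eq_card (hd.trans hcard.symm) hpos)
      exact (coeff_eq_zero_of_forall_lt hm hM hMN (hN · k) hf hd hlt hk).symm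

theorem finrank_quartics_through_labs_cusps_general (hm : 2 ≤ m) (hcard : Fintype.card ι = m + 1)
    (hM : M.IsSymm) (hMN : M * N = 1) (hN : ∀ i k, N i k = 0 ↔ i = k) :
    Module.finrank K (formsThroughSingularPoints (m + 1) (powerQuadric m M)) = m + 2 := by
  rw [← range_polarCombination hm hcard hM hMN hN,
    LinearMap.finrank_range_of_inj
      (polarCombination_injective hm (IsUnit.of_mul_eq_one _ hMN)),
    Module.finrank_prod, Module.finrank_fintype_fun_eq_card, Module.finrank_self, hcard]

end Tangency

/-- The Gram matrix of the Labs sextic, viewed as a quadratic form in the cubes of the variables. -/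
noncomputable def labsMatrix : Matrix (Fin 4) (Fin 4) ℂ :=
  (1 / 7938 : ℂ) • !![-784, 3185, 392, 49; 3185, -784, 392, 49; 392, 392, 128, -65; 49, 49, -65, 2]

/-- The inverse of `labsMatrix`. Its columns are twice the vectors `(0, 1, 1, 8)`, `(1, 0, 1, 8)`,
`(1, 1, 0, -49)`, `(8, 8, -49, 0)` of cubed coordinates of the singular points. -/
def labsDualMatrix : Matrix (Fin 4) (Fin 4) ℂ :=
  !![0, 2, 2, 16; 2, 0, 2, 16; 2, 2, 0, -98; 16, 16, -98, 0]

lemma labsMatrix_isSymm : labsMatrix.IsSymm := by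
  refine Matrix.IsSymm.smul (Matrix.IsSymm.ext fun i j => ?_) _
  fin_cases i <;> fin_cases j <;> rfl

lemma labsMatrix_mul_labsDualMatrix : labsMatrix * labsDualMatrix = 1 := by
  ext i j
  fin_cases i <;> fin_cases j <;>
    simp [labsMatrix, labsDualMatrix, Matrix.mul_apply, Fin.sum_univ_four] <;> norm_num

lemma labsDualMatrix_apply_eq_zero_iff (i j : Fin 4) : labsDualMatrix i j = 0 ↔ i = j := by
  fin_cases i <;> fin_cases j <;> simp [labsDualMatrix]

lemma powerQuadric_labsMatrix : powerQuadric 3 labsMatrix = labsG := by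
  refine MvPolynomial.funext fun z => ?_
  simp [powerQuadric, labsMatrix, labsG, labsA, labsB, Fin.sum_univ_four]
  ring

/-- The `36` singular points of the Labs sextic impose exactly `30` independent
conditions on quartic forms: the space of quartics through them has dimension `5`. -/
theorem finrank_quartics_through_labs_cusps :
    Module.finrank ℂ ↥quarticsThroughLabsCusps = 5 := by
  have h := finrank_quartics_through_labs_cusps_general (m := 3) le_add_self (Fintype.card_fin 4)
    labsMatrix_isSymm labsMatrix_mul_labsDualMatrix labsDualMatrix_apply_eq_zero_iff
  rwa [powerQuadric_labsMatrix] at h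
end
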